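/- For every infinite stochastic vector η with positive entries and ∑_{i=1}^∞ η_i · |log η_i| < ∞, the set F(η) of η-quasinormal numbers for the continued fraction expansion is dense in [0,1]. -/

import Mathlib

open Real Filter

/-- The Gauss map `T x = 1/x - ⌊1/x⌋`. -/
noncomputable def gaussT (x : ℝ) : ℝ := x⁻¹ - ⌊x⁻¹⌋

/-- The `k+1`-st digit of `x` in the continued fraction expansion: `d_{k+1}(x) = ⌊1/T^k x⌋`. -/
noncomputable def cfDigit (k : ℕ) (x : ℝ) : ℤ := ⌊(gaussT^[k] x)⁻¹⌋

/-- The set `F(η)` of `η`-quasinormal numbers for the continued fraction expansion. -/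
def cfFreqSet (η : ℕ+ → ℝ) : Set ℝ :=
  {x | x ∈ Set.Ioo (0 : ℝ) 1 ∧ Irrational x ∧ ∀ i : ℕ+,
    Tendsto (fun n => (((Finset.range n).filter
        (fun k => cfDigit k x = ((i : ℕ) : ℤ))).card : ℝ) / n) atTop (nhds (η i))}

/-!
The set `F(η)` is invariant under every inverse branch `x ↦ 1 / (a + x)` of the Gauss map, because
prepending a digit does not affect limiting frequencies. Hence so is its closure, and a nonempty
closed subset of `[0, 1]` invariant under all the branches is `[0, 1]`: it contains
`0 = lim 1 / (a + x)`, hence, running the Euclidean algorithm backwards, all rationals.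
For `F(η) ≠ ∅`, the strong law of large numbers gives a digit sequence with frequencies `η`, and
compactness gives a number with these digits; it is irrational since its orbit never reaches `0`.
-/

open Set MeasureTheory ProbabilityTheory Topology

/-- The natural numbers satisfying `p` have limiting frequency (natural density) `c`. It is stated
with `Nat.count p n`, the number of `k < n` satisfying `p`. -/
def HasFrequency (p : ℕ → Prop) [DecidablePred p] (c : ℝ) : Prop :=
  Tendsto (fun n ↦ (Nat.count p n : ℝ) / n) atTop (𝓝 c)

lemma HasFrequency.of_succ {p : ℕ → Prop} [DecidablePred p] {c : ℝ}
    (h : HasFrequency (fun k ↦ p (k + 1)) c) : HasFrequency p c := by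
  set d : ℝ := if p 0 then 1 else 0 with hd
  have hlim : Tendsto (fun n : ℕ ↦ (Nat.count (fun k ↦ p (k + 1)) n : ℝ) / n * (n / (n + 1 : ℝ)) +
      d * (1 / ((n : ℝ) + 1))) atTop (𝓝 (c * 1 + d * 0)) :=
    (h.mul (tendsto_natCast_div_add_atTop 1)).add
      (tendsto_one_div_add_atTop_nhds_zero_nat.const_mul d)
  rw [mul_one, mul_zero, add_zero] at hlim
  refine (tendsto_add_atTop_iff_nat 1).1 (hlim.congr' ?_)
  filter_upwards [eventually_ne_atTop 0] with n hn
  rw [Nat.count_succ']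
  push_cast
  rw [← hd]
  field_simp

lemma ae_hasFrequency_mem {α : Type*} [MeasurableSpace α] (μ : Measure α) [IsProbabilityMeasure μ]
    {s : Set α} [DecidablePred (· ∈ s)] (hs : MeasurableSet s) :
    ∀ᵐ ω ∂Measure.infinitePi (fun _ : ℕ ↦ μ), HasFrequency (fun k ↦ ω k ∈ s) (μ.real s) := by
  set P := Measure.infinitePi (fun _ : ℕ ↦ μ)
  let f : α → ℝ := s.indicator 1
  have hf : Measurable f := measurable_one.indicator hs
  have heval (k : ℕ) : MeasurePreserving (Function.eval k) P μ :=
    measurePreserving_eval_infinitePi (fun _ ↦ μ) k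
  have hint : Integrable (fun ω ↦ f (ω 0)) P :=
    (heval 0).integrable_comp_of_integrable ((integrable_const 1).indicator hs)
  have hindep : iIndepFun (fun k ω ↦ f (ω k)) P := iIndepFun_infinitePi fun _ ↦ hf
  have hident (k : ℕ) : IdentDistrib (fun ω ↦ f (ω k)) (fun ω ↦ f (ω 0)) P P :=
    IdentDistrib.comp ⟨(heval k).aemeasurable, (heval 0).aemeasurable,
      (heval k).map_eq.trans (heval 0).map_eq.symm⟩ hf
  have hmean : ∫ ω, f (ω 0) ∂P = μ.real s := by
    rw [← integral_indicator_one hs, ← (heval 0).map_eq,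
      integral_map (heval 0).aemeasurable hf.aestronglyMeasurable]
  have hsum (ω : ℕ → α) (n : ℕ) :
      ∑ k ∈ Finset.range n, f (ω k) = Nat.count (fun k ↦ ω k ∈ s) n := by
    simp [f, Nat.count_eq_card_filter_range, Set.indicator_apply]
  have hlaw := strong_law_ae_real (fun k (ω : ℕ → α) ↦ f (ω k)) hint
    (fun _ _ ↦ hindep.indepFun) hident
  simpa only [HasFrequency, hsum, hmean] using hlaw

lemma exists_seq_forall_hasFrequency {α : Type*} [Countable α] [DecidableEq α] {η : α → ℝ}
    (hη : ∀ i, 0 ≤ η i) (hη1 : HasSum η 1) :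
    ∃ a : ℕ → α, ∀ i, HasFrequency (fun k ↦ a k = i) (η i) := by
  let _ : MeasurableSpace α := ⊤
  let p : PMF α := ⟨fun i ↦ ENNReal.ofReal (η i), by
    rw [ENNReal.summable.hasSum_iff, ← ENNReal.ofReal_tsum_of_nonneg hη hη1.summable, hη1.tsum_eq,
      ENNReal.ofReal_one]⟩
  have hreal (i : α) : p.toMeasure.real {i} = η i := by
    rw [Measure.real, p.toMeasure_apply_singleton i trivial]
    exact ENNReal.toReal_ofReal (hη i)
  have hae (i : α) := ae_hasFrequency_mem p.toMeasure (measurableSet_singleton i)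
  simp only [hreal, mem_singleton_iff] at hae
  exact (ae_all_iff.2 hae).exists

lemma exists_forall_lt_eq_apply_succ {X : ℕ → Type*} [∀ n, Nonempty (X n)]
    (f : ∀ n, X (n + 1) → X n) (N : ℕ) : ∃ y : ∀ n, X n, ∀ n < N, y n = f n (y (n + 1)) := by
  induction N generalizing X with
  | zero => exact ⟨fun n ↦ Classical.arbitrary (X n), by simp⟩
  | succ N ih =>
    obtain ⟨y, hy⟩ := ih (X := fun n ↦ X (n + 1)) fun n ↦ f (n + 1)
    let y' : ∀ n, X n
      | 0 => f 0 (y 0)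
      | n + 1 => y n
    refine ⟨y', fun n hn ↦ ?_⟩
    cases n with
    | zero => rfl
    | succ n => exact hy n (by lia)

lemma exists_forall_eq_apply_succ {X : ℕ → Type*} [∀ n, TopologicalSpace (X n)]
    [∀ n, CompactSpace (X n)] [∀ n, T2Space (X n)] [∀ n, Nonempty (X n)]
    (f : ∀ n, X (n + 1) → X n) (hf : ∀ n, Continuous (f n)) :
    ∃ y : ∀ n, X n, ∀ n, y n = f n (y (n + 1)) := by
  let C (n : ℕ) : Set (∀ n, X n) := {y | ∀ k < n, y k = f k (y (k + 1))}
  have hclosed (n : ℕ) : IsClosed (C n) := by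
    simp only [C, ofPred_forall]
    exact isClosed_biInter fun k _ ↦
      isClosed_eq (continuous_apply k) ((hf k).comp (continuous_apply (k + 1)))
  obtain ⟨y, hy⟩ := IsCompact.nonempty_iInter_of_sequence_nonempty_isCompact_isClosed C
    (fun n y hy k hk ↦ hy k (by lia)) (fun n ↦ exists_forall_lt_eq_apply_succ f n)
    (hclosed 0).isCompact hclosed
  exact ⟨y, fun n ↦ mem_iInter.1 hy (n + 1) n n.lt_succ_self⟩

/-- The inverse branch `x ↦ 1 / (a + x)` of the Gauss map that prepends the digit `a` to the
continued fraction expansion of `x`. -/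
noncomputable def gaussBranch (a : ℕ+) (x : ℝ) : ℝ := (a + x)⁻¹

lemma gaussBranch_mem_Ioc (a : ℕ+) {x : ℝ} (hx : 0 ≤ x) : gaussBranch a x ∈ Ioc 0 1 := by
  have ha : (1 : ℝ) ≤ a := mod_cast a.pos
  exact ⟨inv_pos.2 (by linarith), inv_le_one_of_one_le₀ (by linarith)⟩

lemma gaussBranch_mem_Ioo (a : ℕ+) {x : ℝ} (hx : 0 < x) : gaussBranch a x ∈ Ioo 0 1 := by
  have ha : (1 : ℝ) ≤ a := mod_cast a.pos
  exact ⟨(gaussBranch_mem_Ioc a hx.le).1, inv_lt_one_of_one_lt₀ (by linarith)⟩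

lemma mapsTo_gaussBranch_Icc (a : ℕ+) : MapsTo (gaussBranch a) (Icc 0 1) (Icc 0 1) :=
  fun _ hx ↦ Ioc_subset_Icc_self (gaussBranch_mem_Ioc a hx.1)

lemma continuousOn_gaussBranch (a : ℕ+) : ContinuousOn (gaussBranch a) (Ici 0) := by
  refine ContinuousOn.inv₀ (by fun_prop) fun x hx ↦ ?_
  exact (add_pos_of_pos_of_nonneg (mod_cast a.pos) hx).ne'

lemma tendsto_gaussBranch_succPNat (x : ℝ) :
    Tendsto (fun n : ℕ ↦ gaussBranch n.succPNat x) atTop (𝓝 0) :=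
  (tendsto_atTop_add_const_right _ x
    (tendsto_natCast_atTop_atTop.comp (tendsto_add_atTop_nat 1))).inv_tendsto_atTop

lemma floor_inv_gaussBranch (a : ℕ+) {x : ℝ} (hx : x ∈ Ico 0 1) :
    ⌊(gaussBranch a x)⁻¹⌋ = (a : ℕ) := by
  rw [gaussBranch, inv_inv, Int.floor_natCast_add, Int.floor_eq_zero_iff.2 hx, add_zero]

lemma gaussT_gaussBranch (a : ℕ+) {x : ℝ} (hx : x ∈ Ico 0 1) : gaussT (gaussBranch a x) = x := by
  rw [gaussT, floor_inv_gaussBranch a hx, gaussBranch, inv_inv, Int.cast_natCast,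
    add_sub_cancel_left]

lemma exists_gaussBranch_gaussT {x : ℝ} (hx : x ∈ Ioc 0 1) :
    ∃ a : ℕ+, gaussBranch a (gaussT x) = x := by
  have hfloor : 0 < ⌊x⁻¹⌋₊ := Nat.floor_pos.2 ((one_le_inv₀ hx.1).2 hx.2)
  refine ⟨⟨⌊x⁻¹⌋₊, hfloor⟩, ?_⟩
  simp only [gaussBranch, gaussT, PNat.mk_coe]
  rw [natCast_floor_eq_intCast_floor (inv_nonneg.2 hx.1.le), add_sub_cancel, inv_inv]

lemma cfDigit_succ_gaussBranch (a : ℕ+) {x : ℝ} (hx : x ∈ Ico 0 1) (k : ℕ) :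
    cfDigit (k + 1) (gaussBranch a x) = cfDigit k x := by
  rw [cfDigit, Function.iterate_succ_apply, gaussT_gaussBranch a hx, cfDigit]

lemma rat_fract_inv_induction {P : ℚ → Prop} (zero : P 0)
    (step : ∀ q ≠ 0, P (Int.fract q⁻¹) → P q) (q : ℚ) : P q := by
  have nonneg (n : ℕ) : ∀ q : ℚ, 0 ≤ q → q.num.toNat = n → P q := by
    induction n using Nat.strong_induction_on with
    | _ n ih =>
      rintro q hq rfl
      obtain rfl | hpos := hq.eq_or_lt
      · exact zero
      · have hnum : (Int.fract q⁻¹).num < q.num := Rat.fract_inv_num_lt_num_of_pos hpos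
        have hqnum : 0 < q.num := Rat.num_pos.2 hpos
        exact step q hpos.ne' (ih _ (by lia) _ (Int.fract_nonneg _) rfl)
  obtain rfl | hq := eq_or_ne q 0
  · exact zero
  · exact step q hq (nonneg _ _ (Int.fract_nonneg _) rfl)

lemma gaussT_ratCast (q : ℚ) : gaussT q = (Int.fract q⁻¹ : ℚ) := by
  rw [gaussT, Int.self_sub_floor, Rat.cast_fract, Rat.cast_inv]

lemma exists_iterate_gaussT_ratCast_eq_zero (q : ℚ) : ∃ k, gaussT^[k] q = 0 := by
  induction q using rat_fract_inv_induction with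
  | zero => exact ⟨0, Rat.cast_zero⟩
  | step q _ ih =>
    obtain ⟨k, hk⟩ := ih
    exact ⟨k + 1, by rwa [Function.iterate_succ_apply, gaussT_ratCast]⟩

lemma irrational_of_forall_iterate_gaussT_ne_zero {x : ℝ} (hx : ∀ k, gaussT^[k] x ≠ 0) :
    Irrational x := by
  rintro ⟨q, rfl⟩
  obtain ⟨k, hk⟩ := exists_iterate_gaussT_ratCast_eq_zero q
  exact hx k hk

theorem eq_Icc_of_mapsTo_gaussBranch {S : Set ℝ} (hS : IsClosed S) (hne : S.Nonempty)
    (hsub : S ⊆ Icc 0 1) (hmaps : ∀ a, MapsTo (gaussBranch a) S S) : S = Icc 0 1 := by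
  have hzero : (0 : ℝ) ∈ S := by
    obtain ⟨x, hx⟩ := hne
    exact hS.mem_of_tendsto (tendsto_gaussBranch_succPNat x) (.of_forall fun n ↦ hmaps _ hx)
  have hrat (q : ℚ) : (q : ℝ) ∈ Icc (0 : ℝ) 1 → (q : ℝ) ∈ S := by
    induction q using rat_fract_inv_induction with
    | zero => simpa using hzero
    | step q hq ih =>
      intro hq01
      have hpos : (0 : ℝ) < q := hq01.1.lt_of_ne' (mod_cast hq)
      obtain ⟨a, ha⟩ := exists_gaussBranch_gaussT ⟨hpos, hq01.2⟩
      rw [← ha, gaussT_ratCast]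
      exact hmaps a (ih ⟨mod_cast Int.fract_nonneg _, mod_cast (Int.fract_lt_one _).le⟩)
  refine hsub.antisymm ?_
  calc Icc (0 : ℝ) 1 = closure (Ioo 0 1) := (closure_Ioo zero_ne_one).symm
    _ ⊆ closure (Ioo 0 1 ∩ range ((↑) : ℚ → ℝ)) :=
      closure_minimal (Rat.denseRange_cast.open_subset_closure_inter isOpen_Ioo) isClosed_closure
    _ ⊆ S := closure_minimal (by rintro _ ⟨hq, q, rfl⟩; exact hrat q (Ioo_subset_Icc_self hq)) hS

lemma exists_forall_eq_gaussBranch_succ (a : ℕ → ℕ+) :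
    ∃ y : ℕ → ℝ, ∀ k, y k ∈ Ioo 0 1 ∧ y k = gaussBranch (a k) (y (k + 1)) := by
  obtain ⟨y, hy⟩ := exists_forall_eq_apply_succ (X := fun _ ↦ Icc (0 : ℝ) 1)
    (fun k ↦ (mapsTo_gaussBranch_Icc (a k)).restrict)
    (fun k ↦ ((continuousOn_gaussBranch (a k)).mono Icc_subset_Ici_self).mapsToRestrict _)
  have hbranch (k : ℕ) : (y k : ℝ) = gaussBranch (a k) (y (k + 1)) := congrArg Subtype.val (hy k)
  have hpos (k : ℕ) : 0 < (y k : ℝ) := hbranch k ▸ (gaussBranch_mem_Ioc _ (y (k + 1)).2.1).1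
  refine ⟨fun k ↦ y k, fun k ↦ ⟨?_, hbranch k⟩⟩
  simp only [hbranch k]
  exact gaussBranch_mem_Ioo _ (hpos (k + 1))

lemma exists_irrational_forall_cfDigit_eq (a : ℕ → ℕ+) :
    ∃ x ∈ Ioo (0 : ℝ) 1, Irrational x ∧ ∀ k, cfDigit k x = (a k : ℕ) := by
  obtain ⟨y, hy⟩ := exists_forall_eq_gaussBranch_succ a
  have hmem (k : ℕ) : y k ∈ Ico (0 : ℝ) 1 := Ioo_subset_Ico_self (hy k).1
  have horbit (k : ℕ) : gaussT^[k] (y 0) = y k := by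
    induction k with
    | zero => rfl
    | succ k ih =>
      rw [Function.iterate_succ_apply', ih, (hy k).2, gaussT_gaussBranch _ (hmem (k + 1))]
  refine ⟨y 0, (hy 0).1, irrational_of_forall_iterate_gaussT_ne_zero fun k ↦ ?_, fun k ↦ ?_⟩
  · exact horbit k ▸ (hy k).1.1.ne'
  · rw [cfDigit, horbit, (hy k).2, floor_inv_gaussBranch _ (hmem (k + 1))]

lemma mem_cfFreqSet_iff {η : ℕ+ → ℝ} {x : ℝ} :
    x ∈ cfFreqSet η ↔ x ∈ Ioo (0 : ℝ) 1 ∧ Irrational x ∧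
      ∀ i : ℕ+, HasFrequency (fun k ↦ cfDigit k x = (i : ℕ)) (η i) := by
  simp only [cfFreqSet, HasFrequency, Nat.count_eq_card_filter_range, mem_ofPred_eq]

lemma mapsTo_gaussBranch_cfFreqSet (η : ℕ+ → ℝ) (a : ℕ+) :
    MapsTo (gaussBranch a) (cfFreqSet η) (cfFreqSet η) := by
  intro x hx
  obtain ⟨hx01, hirr, hfreq⟩ := mem_cfFreqSet_iff.1 hx
  refine mem_cfFreqSet_iff.2 ⟨gaussBranch_mem_Ioo a hx01.1, (hirr.natCast_add a).inv, fun i ↦ ?_⟩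
  apply HasFrequency.of_succ
  simpa only [cfDigit_succ_gaussBranch a (Ioo_subset_Ico_self hx01)] using hfreq i

theorem closure_cfFreqSet_eq_Icc {η : ℕ+ → ℝ} (hne : (cfFreqSet η).Nonempty) :
    closure (cfFreqSet η) = Icc 0 1 := by
  have hsub : closure (cfFreqSet η) ⊆ Icc 0 1 :=
    closure_minimal (fun _ hx ↦ Ioo_subset_Icc_self hx.1) isClosed_Icc
  refine eq_Icc_of_mapsTo_gaussBranch isClosed_closure hne.closure hsub fun a ↦ ?_
  exact (mapsTo_gaussBranch_cfFreqSet η a).closure_of_continuousOn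
    ((continuousOn_gaussBranch a).mono (hsub.trans Icc_subset_Ici_self))

theorem cfFreqSet_nonempty {η : ℕ+ → ℝ} (hη : ∀ i, 0 ≤ η i) (hη1 : HasSum η 1) :
    (cfFreqSet η).Nonempty := by
  obtain ⟨a, ha⟩ := exists_seq_forall_hasFrequency hη hη1
  obtain ⟨x, hx01, hirr, hdigit⟩ := exists_irrational_forall_cfDigit_eq a
  refine ⟨x, mem_cfFreqSet_iff.2 ⟨hx01, hirr, fun i ↦ ?_⟩⟩
  simpa only [hdigit, Nat.cast_inj, PNat.coe_inj] using ha i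

theorem cf_quasinormal_dense_general {η : ℕ+ → ℝ} (hη : ∀ i, 0 ≤ η i) (hη1 : HasSum η 1) :
    Icc (0 : ℝ) 1 ⊆ closure (cfFreqSet η) :=
  (closure_cfFreqSet_eq_Icc (cfFreqSet_nonempty hη hη1)).ge

/-- For every infinite stochastic vector `η` with positive entries and
`∑ᵢ ηᵢ |log ηᵢ| < ∞`, the set `F(η)` of `η`-quasinormal numbers for the continued fraction
expansion is dense in `[0, 1]`. -/
theorem cf_quasinormal_dense
    (η : ℕ+ → ℝ) (hηpos : ∀ i, 0 < η i)
    (hηsum : Summable η) (hη1 : ∑' i, η i = 1)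
    (hηlog : Summable (fun i => η i * |Real.log (η i)|)) :
    Set.Icc (0 : ℝ) 1 ⊆ closure (cfFreqSet η) := by
  exact cf_quasinormal_dense_general (fun i ↦ (hηpos i).le) (hη1 ▸ hηsum.hasSum)
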